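/- arXiv:1802.02658 — 2 statements merged into one kernel-verified Lean document; each statement's English description precedes it below -/
import Mathlib

section
/- Let G be a countable discrete group, Γ ⊆ G, and φ ∈ ℓ²(G). Then the following are equivalent: (a) there exist constants 0 < A ≤ B < ∞ with A‖g‖² ≤ ∑_{x∈Γ} |⟨g, λ(x)φ⟩|² ≤ B‖g‖² for all g ∈ ℓ²(G); (b) Γ = G and the family (λ(x)φ)_{x∈G} is a Riesz basis of ℓ²(G), i.e. it satisfies the frame inequalities of (a) with Γ = G and in addition there is a constant C < ∞ such that ∑_{x∈G} |c_x|² ≤ C ‖∑_{x∈G} c_x λ(x)φ‖² for every finitely supported family (c_x)_{x∈G} of complex numbers. -/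
open scoped ENNReal

namespace Stmt11

/-- The frame inequalities with bounds `A, B` for the family of left translates
`(λ(x)φ)_{x ∈ Γ}` of `φ ∈ ℓ²(G)` over a discrete group `G`, where `(λ(x)f)(t) = f(x⁻¹ t)`:
`A‖g‖² ≤ ∑_{x ∈ Γ} |⟨g, λ(x)φ⟩|² ≤ B‖g‖²` for all `g ∈ ℓ²(G)`.  (The outer sum is computed
in `ℝ≥0∞`, so no summability assumption is needed.) -/
def IsTranslationFrame {G : Type*} [Group G] (Γ : Set G) (φ : G → ℂ) (A B : ℝ) : Prop :=
  ∀ g : G → ℂ, Summable (fun t => ‖g t‖ ^ 2) →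
    (ENNReal.ofReal (A * ∑' t, ‖g t‖ ^ 2) ≤
        ∑' x : Γ, (‖∑' t, g t * (starRingEnd ℂ) (φ ((x : G)⁻¹ * t))‖₊ : ℝ≥0∞) ^ 2) ∧
      ∑' x : Γ, (‖∑' t, g t * (starRingEnd ℂ) (φ ((x : G)⁻¹ * t))‖₊ : ℝ≥0∞) ^ 2 ≤
        ENNReal.ofReal (B * ∑' t, ‖g t‖ ^ 2)

/-!
Since `∑ x, c x • λ(x)φ = c ⋆ φ`, a frame of translates provides a bounded right inverse `R` of
`c ↦ c ⋆ φ` all of whose values are supported in `Γ`. Projecting away the kernel of convolution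
with `φ` makes the right inverse equivariant, hence of the form `S b = b ⋆ s` with `s = S δ₁`. As
`(c ⋆ d)(1) = (d ⋆ c)(1)`, this gives `(S φ)(1) = (φ ⋆ s)(1) = (s ⋆ φ)(1) = δ₁(1) = 1`. Now
`S φ - δ₁` lies in the kernel, so it is orthogonal to `S φ`, and it vanishes at `1`, so it is
orthogonal to `δ₁`. Hence `S φ = δ₁` is orthogonal to the kernel, which by translation invariance
is therefore trivial. Consequently `R (λ(x)φ) = δ_x` for every `x`: this forces `x ∈ Γ`, and
`R (∑ x, c x • λ(x)φ) = c` is the Riesz inequality with constant `‖R‖²`.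
-/

open DiscreteConvolution ContinuousLinearMap
open scoped NNReal lp InnerProductSpace

section SquareSummable

variable {ι : Type*} {E : ι → Type*} [∀ i, NormedAddCommGroup (E i)]

theorem memℓp_two_iff_summable {f : ∀ i, E i} : Memℓp f 2 ↔ Summable fun i => ‖f i‖ ^ 2 := by
  simp [memℓp_gen_iff]

theorem norm_sq_eq_tsum (f : lp E 2) : ‖f‖ ^ 2 = ∑' i, ‖f i‖ ^ 2 := by
  simpa using lp.norm_rpow_eq_tsum (by simp) f

theorem summable_norm_sq (f : lp E 2) : Summable fun i => ‖f i‖ ^ 2 :=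
  memℓp_two_iff_summable.1 (lp.memℓp f)

theorem enorm_sq_eq_tsum (f : lp E 2) : ‖f‖ₑ ^ 2 = ∑' i, ‖f i‖ₑ ^ 2 := by
  simp_rw [← ofReal_norm, ← ENNReal.ofReal_pow (norm_nonneg _), norm_sq_eq_tsum]
  exact ENNReal.ofReal_tsum_of_nonneg (fun _ => by positivity) (summable_norm_sq f)

theorem memℓp_two_of_tsum_enorm_ne_top {f : ∀ i, E i} (h : ∑' i, ‖f i‖ₑ ^ 2 ≠ ∞) :
    Memℓp f 2 :=
  memℓp_two_iff_summable.2 <| by simpa using ENNReal.summable_toReal h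

theorem norm_sq_sum_single [DecidableEq ι] (s : Finset ι) (c : ∀ i, E i) :
    ‖∑ i ∈ s, lp.single 2 i (c i)‖ ^ 2 = ∑ i ∈ s, ‖c i‖ ^ 2 := by
  simpa using lp.norm_sum_single (p := 2) (by simp) c s

end SquareSummable

section Frame

variable {𝕜 ι E : Type*} [RCLike 𝕜] [NormedAddCommGroup E] [InnerProductSpace 𝕜 E] {η : ι → E}
  {A B : ℝ≥0}

variable (𝕜) in
/-- The family `η` is a frame with bounds `A` and `B`. As in `IsTranslationFrame`, the sum lives in
`ℝ≥0∞`, so that the upper bound carries the summability. -/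
def IsFrame (η : ι → E) (A B : ℝ≥0) : Prop :=
  ∀ g, A * ‖g‖ₑ ^ 2 ≤ ∑' i, ‖⟪η i, g⟫_𝕜‖ₑ ^ 2 ∧ ∑' i, ‖⟪η i, g⟫_𝕜‖ₑ ^ 2 ≤ B * ‖g‖ₑ ^ 2

theorem exists_analysisOperator (h : ∀ g, ∑' i, ‖⟪η i, g⟫_𝕜‖ₑ ^ 2 ≤ B * ‖g‖ₑ ^ 2) :
    ∃ T : E →L[𝕜] ℓ²(ι, 𝕜), ∀ g i, T g i = ⟪η i, g⟫_𝕜 := by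
  have hmem (g : E) : Memℓp (fun i => ⟪η i, g⟫_𝕜) 2 :=
    memℓp_two_of_tsum_enorm_ne_top <|
      ne_top_of_le_ne_top (ENNReal.mul_ne_top ENNReal.coe_ne_top (by simp)) (h g)
  let T : E →ₗ[𝕜] ℓ²(ι, 𝕜) :=
    { toFun g := ⟨fun i => ⟪η i, g⟫_𝕜, hmem g⟩
      map_add' f g := by ext i; exact inner_add_right _ _ _
      map_smul' a g := by ext i; exact inner_smul_right _ _ _ }
  refine ⟨T.mkContinuous √B fun g => ?_, fun _ _ => rfl⟩
  have hsq : ‖T g‖₊ ^ 2 ≤ B * ‖g‖₊ ^ 2 := by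
    have := (enorm_sq_eq_tsum (T g)).trans_le (h g)
    simpa only [enorm_eq_nnnorm, ← ENNReal.coe_pow, ← ENNReal.coe_mul, ENNReal.coe_le_coe]
      using this
  refine Real.le_sqrt_of_sq_le (y := B * ‖g‖ ^ 2) (mod_cast hsq) |>.trans_eq ?_
  rw [Real.sqrt_mul B.coe_nonneg, Real.sqrt_sq (norm_nonneg g)]

/-- `R b` consists of the coefficients of `b` with respect to the canonical dual frame. -/
theorem IsFrame.exists_coefficientOperator [CompleteSpace E] (h : IsFrame 𝕜 η A B) (hA : 0 < A) :
    ∃ R : E →L[𝕜] ℓ²(ι, 𝕜), (∀ b g, ∑' i, R b i * ⟪g, η i⟫_𝕜 = ⟪g, b⟫_𝕜) ∧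
      ∀ b i, η i = 0 → R b i = 0 := by
  obtain ⟨T, hT⟩ := exists_analysisOperator fun g => (h g).2
  have hlower (g : E) : ‖g‖ ^ 2 * A ≤ ‖T g‖ ^ 2 := by
    have : A * ‖g‖ₑ ^ 2 ≤ ‖T g‖ₑ ^ 2 := by simpa only [enorm_sq_eq_tsum, hT] using (h g).1
    simp only [enorm_eq_nnnorm, ← ENNReal.coe_pow, ← ENNReal.coe_mul, ENNReal.coe_le_coe] at this
    rw [mul_comm]
    exact_mod_cast this
  have hunit : IsUnit (adjoint T ∘L T) :=
    isUnit_of_forall_le_norm_inner_map _ hA fun g => by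
      simpa [adjoint_inner_left, inner_self_eq_norm_sq_to_K] using hlower g
  obtain ⟨D, hD⟩ := hunit.exists_right_inv
  refine ⟨T ∘L D, fun b g => ?_, fun b i hi => by simp [hT, hi]⟩
  calc ∑' i, T (D b) i * ⟪g, η i⟫_𝕜
      = ⟪T g, T (D b)⟫_𝕜 := by simp only [lp.inner_eq_tsum, hT, RCLike.inner_apply, inner_conj_symm]
    _ = ⟪g, (adjoint T ∘L T * D) b⟫_𝕜 := (adjoint_inner_right T g (T (D b))).symm
    _ = ⟪g, b⟫_𝕜 := by rw [hD, one_apply_eq_self]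

end Frame

section LeftRegular

variable {𝕜 G : Type*} [RCLike 𝕜] [Group G]

section Reindex

variable {ι κ F : Type*} [NormedAddCommGroup F] [NormedSpace 𝕜 F]

theorem memℓp_two_comp_equiv (f : ℓ²(ι, F)) (e : κ ≃ ι) : Memℓp (fun k => f (e k)) 2 :=
  memℓp_two_iff_summable.2 <| e.summable_iff.2 (summable_norm_sq f)

variable (𝕜 F) in
/-- The isometry `f ↦ f ∘ e⁻¹` of `ℓ²` spaces induced by a bijection `e` of the index sets. -/
noncomputable def reindex (e : ι ≃ κ) : ℓ²(ι, F) ≃ₗᵢ[𝕜] ℓ²(κ, F) where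
  toFun f := ⟨fun k => f (e.symm k), memℓp_two_comp_equiv f e.symm⟩
  invFun f := ⟨fun i => f (e i), memℓp_two_comp_equiv f e⟩
  map_add' _ _ := rfl
  map_smul' _ _ := rfl
  left_inv f := by ext; simp
  right_inv f := by ext; simp
  norm_map' f := by
    rw [← sq_eq_sq₀ (norm_nonneg _) (norm_nonneg _), norm_sq_eq_tsum, norm_sq_eq_tsum]
    exact e.symm.tsum_eq fun i => ‖f i‖ ^ 2

@[simp]
theorem reindex_apply (e : ι ≃ κ) (f : ℓ²(ι, F)) (k : κ) : reindex 𝕜 F e f k = f (e.symm k) := rfl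

end Reindex

variable (𝕜 G) in
/-- The left regular representation `(λ(x)f)(t) = f(x⁻¹t)` of `G` on `ℓ²(G, 𝕜)`. -/
noncomputable def leftRegular : G →* (ℓ²(G, 𝕜) ≃ₗᵢ[𝕜] ℓ²(G, 𝕜)) where
  toFun x := reindex 𝕜 𝕜 (Equiv.mulLeft x)
  map_one' := by
    ext f t
    exact congrArg f (by simp : 1⁻¹ * t = t)
  map_mul' x y := by
    ext f t
    exact congrArg f (by simp [mul_assoc] : (x * y)⁻¹ * t = y⁻¹ * (x⁻¹ * t))

@[simp]
theorem leftRegular_apply (x : G) (f : ℓ²(G, 𝕜)) (t : G) :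
    leftRegular 𝕜 G x f t = f (x⁻¹ * t) := rfl

theorem sum_smul_leftRegular_apply (s : Finset G) (c : G → 𝕜) (f : ℓ²(G, 𝕜)) (t : G) :
    (∑ x ∈ s, c x • leftRegular 𝕜 G x f : ℓ²(G, 𝕜)) t = ∑ x ∈ s, c x * f (x⁻¹ * t) := by
  simp only [lp.coeFn_sum, Finset.sum_apply, lp.coeFn_smul, Pi.smul_apply, leftRegular_apply,
    smul_eq_mul]

theorem inner_leftRegular_right (x : G) (f g : ℓ²(G, 𝕜)) :
    ⟪f, leftRegular 𝕜 G x g⟫_𝕜 = ⟪leftRegular 𝕜 G x⁻¹ f, g⟫_𝕜 := by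
  rw [map_inv]
  exact (LinearIsometryEquiv.inner_map_eq_flip (leftRegular 𝕜 G x).symm f g).symm

theorem leftRegular_single [DecidableEq G] (x y : G) (a : 𝕜) :
    leftRegular 𝕜 G x (lp.single 2 y a) = lp.single 2 (x * y) a := by
  ext t
  simp [Pi.single_apply, inv_mul_eq_iff_eq_mul]

theorem leftRegular_mem_orthogonal {K : Submodule 𝕜 ℓ²(G, 𝕜)}
    (hK : ∀ c ∈ K, ∀ x, leftRegular 𝕜 G x c ∈ K) {b : ℓ²(G, 𝕜)} (hb : b ∈ Kᗮ) (x : G) :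
    leftRegular 𝕜 G x b ∈ Kᗮ := fun c hc => by
  rw [inner_leftRegular_right]
  exact hb _ (hK c hc x⁻¹)

end LeftRegular

section Convolution

variable {𝕜 G : Type*} [RCLike 𝕜] [Group G]

local notation:67 f:68 "⋆" g:67 =>
  convolution (LinearMap.mul 𝕜 𝕜) (f : G → 𝕜) (g : G → 𝕜)

theorem convolution_eq_tsum (c φ : G → 𝕜) (t : G) : (c ⋆ φ) t = ∑' x, c x * φ (x⁻¹ * t) := by
  let e : mulFiber t ≃ G :=
    { toFun p := p.1.1
      invFun x := ⟨(x, x⁻¹ * t), mem_mulFiber.2 (mul_inv_cancel_left x t)⟩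
      left_inv p := by ext <;> simp [← mem_mulFiber.1 p.2]
      right_inv x := rfl }
  exact (e.symm.tsum_eq fun p : mulFiber t => c p.1.1 * φ p.1.2).symm

/-- The involution `φ^*(x) = conj φ(x⁻¹)` of `ℓ²(G, 𝕜)`, which turns convolution with `φ` into
inner products with the translates of `φ^*`. -/
noncomputable def involution (φ : ℓ²(G, 𝕜)) : ℓ²(G, 𝕜) := star (reindex 𝕜 𝕜 (Equiv.inv G) φ)

theorem convolution_eq_inner (c φ : ℓ²(G, 𝕜)) (t : G) :
    (c ⋆ φ) t = ⟪leftRegular 𝕜 G t (involution φ), c⟫_𝕜 := by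
  simp [convolution_eq_tsum, lp.inner_eq_tsum, involution]

theorem sub_convolution (c d φ : ℓ²(G, 𝕜)) : ↑(c - d) ⋆ φ = c ⋆ φ - d ⋆ φ := by
  ext t
  simp only [Pi.sub_apply, convolution_eq_inner, inner_sub_right]

theorem leftRegular_convolution (x : G) (c φ : ℓ²(G, 𝕜)) (t : G) :
    (leftRegular 𝕜 G x c ⋆ φ) t = (c ⋆ φ) (x⁻¹ * t) := by
  rw [convolution_eq_inner, convolution_eq_inner, inner_leftRegular_right, map_mul,
    LinearIsometryEquiv.coe_mul, Function.comp_apply]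

theorem single_convolution [DecidableEq G] (x : G) (φ : ℓ²(G, 𝕜)) :
    lp.single 2 x (1 : 𝕜) ⋆ φ = leftRegular 𝕜 G x φ := by
  ext t
  rw [convolution_eq_tsum, tsum_eq_single x fun y hy => by simp [hy]]
  simp

theorem convolution_apply_one_comm (c d : G → 𝕜) : (c ⋆ d) 1 = (d ⋆ c) 1 := by
  rw [convolution_eq_tsum, convolution_eq_tsum, ← (Equiv.inv G).tsum_eq]
  simp [mul_comm]

theorem eq_convolution_of_commute [DecidableEq G] {S : ℓ²(G, 𝕜) →L[𝕜] ℓ²(G, 𝕜)}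
    (hS : ∀ x b, S (leftRegular 𝕜 G x b) = leftRegular 𝕜 G x (S b)) (b : ℓ²(G, 𝕜)) :
    S b = b ⋆ S (lp.single 2 1 1) := by
  ext t
  have hsum := (S.hasSum (lp.hasSum_single (by simp) b)).mapL (lp.evalCLM 𝕜 _ 2 t)
  have hsingle (x : G) :
      lp.single 2 x (b x) = b x • leftRegular 𝕜 G x (lp.single (E := fun _ => 𝕜) 2 1 1) := by
    rw [leftRegular_single, ← lp.single_smul, mul_one, smul_eq_mul, mul_one]
  calc S b t = ∑' x, S (lp.single 2 x (b x)) t := hsum.tsum_eq.symm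
    _ = (b ⋆ S (lp.single 2 1 1)) t := by
      simp only [convolution_eq_tsum, hsingle, map_smul, hS, lp.coeFn_smul, Pi.smul_apply,
        leftRegular_apply, smul_eq_mul]

/-- The square-summable `c` with `c ⋆ φ = 0`, written as an orthogonal complement so that
it is visibly a closed subspace. -/
noncomputable def convolutionKernel (φ : ℓ²(G, 𝕜)) : Submodule 𝕜 ℓ²(G, 𝕜) :=
  (Submodule.span 𝕜 (Set.range fun t => leftRegular 𝕜 G t (involution φ)))ᗮ

instance (φ : ℓ²(G, 𝕜)) : CompleteSpace (convolutionKernel φ) :=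
  Submodule.instOrthogonalCompleteSpace _

theorem mem_convolutionKernel {c φ : ℓ²(G, 𝕜)} : c ∈ convolutionKernel φ ↔ c ⋆ φ = 0 := by
  rw [convolutionKernel, ← Submodule.span_singleton_le_iff_mem, ← Submodule.isOrtho_iff_le,
    Submodule.isOrtho_comm, Submodule.isOrtho_span, funext_iff]
  simp [convolution_eq_inner]

theorem leftRegular_mem_convolutionKernel {c φ : ℓ²(G, 𝕜)} (hc : c ∈ convolutionKernel φ) (x : G) :
    leftRegular 𝕜 G x c ∈ convolutionKernel φ := by
  rw [mem_convolutionKernel] at hc ⊢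
  ext t
  rw [leftRegular_convolution, hc, Pi.zero_apply, Pi.zero_apply]

/-- The operator `R` assigns to every `b` a solution `c` of the equation `c ⋆ φ = b`. -/
abbrev IsConvolutionRightInverse (R : ℓ²(G, 𝕜) →L[𝕜] ℓ²(G, 𝕜)) (φ : ℓ²(G, 𝕜)) : Prop :=
  ∀ b, R b ⋆ φ = b

namespace IsConvolutionRightInverse

variable {φ : ℓ²(G, 𝕜)} {R : ℓ²(G, 𝕜) →L[𝕜] ℓ²(G, 𝕜)}

/-- The solution of `c ⋆ φ = b` of minimal norm is unique, hence depends equivariantly on `b`. -/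
theorem exists_equivariant (hR : IsConvolutionRightInverse R φ) :
    ∃ S : ℓ²(G, 𝕜) →L[𝕜] ℓ²(G, 𝕜), IsConvolutionRightInverse S φ ∧
      (∀ b, S b ∈ (convolutionKernel φ)ᗮ) ∧
      ∀ x b, S (leftRegular 𝕜 G x b) = leftRegular 𝕜 G x (S b) := by
  set K := convolutionKernel φ
  let S := R - K.starProjection ∘L R
  have hS : IsConvolutionRightInverse S φ := fun b => by
    have hproj : K.starProjection (R b) ⋆ φ = 0 :=
      mem_convolutionKernel.1 (K.starProjection_apply_mem _)
    rw [sub_apply, sub_convolution, comp_apply, hproj, sub_zero, hR]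
  have hSorth (b) : S b ∈ Kᗮ := K.sub_starProjection_mem_orthogonal (R b)
  refine ⟨S, hS, hSorth, fun x b => sub_eq_zero.1 ?_⟩
  have hmem : S (leftRegular 𝕜 G x b) - leftRegular 𝕜 G x (S b) ∈ K := by
    rw [mem_convolutionKernel, sub_convolution, hS, sub_eq_zero]
    ext t
    rw [leftRegular_convolution, hS, leftRegular_apply]
  have hmem_orth : S (leftRegular 𝕜 G x b) - leftRegular 𝕜 G x (S b) ∈ Kᗮ :=
    Kᗮ.sub_mem (hSorth _) <|
      leftRegular_mem_orthogonal (fun _ => leftRegular_mem_convolutionKernel) (hSorth b) x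
  exact inner_self_eq_zero.1 (hmem_orth _ hmem)

theorem apply_one_eq_one (hR : IsConvolutionRightInverse R φ)
    (hcomm : ∀ x b, R (leftRegular 𝕜 G x b) = leftRegular 𝕜 G x (R b)) : R φ 1 = 1 := by
  classical
  calc R φ 1 = (φ ⋆ R (lp.single 2 1 1)) 1 := by rw [eq_convolution_of_commute hcomm]
    _ = (R (lp.single 2 1 1) ⋆ φ) 1 := convolution_apply_one_comm _ _
    _ = 1 := by rw [hR, lp.single_apply_self]

theorem single_one_mem_orthogonal [DecidableEq G] (hR : IsConvolutionRightInverse R φ) :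
    lp.single 2 (1 : G) (1 : 𝕜) ∈ (convolutionKernel φ)ᗮ := by
  obtain ⟨S, hS, hSorth, hcomm⟩ := hR.exists_equivariant
  have hmem : S φ - lp.single 2 1 1 ∈ convolutionKernel φ := by
    rw [mem_convolutionKernel, sub_convolution, hS, single_convolution, map_one,
      LinearIsometryEquiv.coe_one, id, sub_self]
  have horth : ⟪S φ - lp.single 2 1 1, lp.single 2 (1 : G) (1 : 𝕜)⟫_𝕜 = 0 := by
    simp [lp.inner_single_right, hS.apply_one_eq_one hcomm]
  have hSφ : S φ = lp.single 2 1 1 := by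
    rw [← sub_eq_zero, ← inner_self_eq_zero (𝕜 := 𝕜), inner_sub_right, hSorth φ _ hmem, horth,
      sub_zero]
  exact hSφ ▸ hSorth φ

theorem convolutionKernel_eq_bot (hR : IsConvolutionRightInverse R φ) :
    convolutionKernel φ = ⊥ := by
  classical
  refine (Submodule.eq_bot_iff _).2 fun c hc => ?_
  ext x
  have hinner := hR.single_one_mem_orthogonal _ (leftRegular_mem_convolutionKernel hc x⁻¹)
  simpa [lp.inner_single_right, -map_inv] using hinner

theorem apply_leftRegular [DecidableEq G] (hR : IsConvolutionRightInverse R φ) (x : G) :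
    R (leftRegular 𝕜 G x φ) = lp.single 2 x 1 := by
  rw [← sub_eq_zero, ← Submodule.mem_bot 𝕜, ← hR.convolutionKernel_eq_bot, mem_convolutionKernel,
    sub_convolution, hR, single_convolution, sub_self]

theorem sum_norm_sq_le (hR : IsConvolutionRightInverse R φ) (s : Finset G) (c : G → 𝕜) :
    ∑ x ∈ s, ‖c x‖ ^ 2 ≤ ‖R‖ ^ 2 * ‖∑ x ∈ s, c x • leftRegular 𝕜 G x φ‖ ^ 2 := by
  classical
  have hRsum : R (∑ x ∈ s, c x • leftRegular 𝕜 G x φ) = ∑ x ∈ s, lp.single 2 x (c x) := by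
    simp [hR.apply_leftRegular, ← lp.single_smul]
  rw [← norm_sq_sum_single, ← hRsum, ← mul_pow]
  gcongr
  exact R.le_opNorm _

end IsConvolutionRightInverse

theorem IsFrame.exists_convolutionRightInverse {Γ : Set G} {φ : ℓ²(G, 𝕜)} {A B : ℝ≥0}
    (h : IsFrame 𝕜 (Γ.indicator fun x => leftRegular 𝕜 G x φ) A B) (hA : 0 < A) :
    ∃ R : ℓ²(G, 𝕜) →L[𝕜] ℓ²(G, 𝕜), IsConvolutionRightInverse R φ ∧ ∀ b, ∀ x ∉ Γ, R b x = 0 := by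
  classical
  obtain ⟨R, hR, hvanish⟩ := h.exists_coefficientOperator hA
  have hsupp (b) (x) (hx : x ∉ Γ) : R b x = 0 := hvanish b x (Set.indicator_of_notMem hx _)
  refine ⟨R, fun b => ?_, hsupp⟩
  ext t
  calc (R b ⋆ φ) t
      = ∑' x, R b x * ⟪lp.single 2 t (1 : 𝕜), Γ.indicator (fun x => leftRegular 𝕜 G x φ) x⟫_𝕜 := by
        rw [convolution_eq_tsum]
        refine tsum_congr fun x => ?_
        by_cases hx : x ∈ Γ
        · simp [hx, lp.inner_single_left]
        · simp [hx, hsupp b x hx]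
    _ = b t := by rw [hR, lp.inner_single_left]; simp

end Convolution

section TranslationFrame

variable {G : Type*} [Group G] {Γ : Set G} {φ : ℓ²(G, ℂ)} {A B : ℝ}

theorem IsTranslationFrame.isFrame_indicator (h : IsTranslationFrame Γ φ A B) :
    IsFrame ℂ (Γ.indicator fun x => leftRegular ℂ G x φ) A.toNNReal B.toNNReal := by
  intro g
  have hsum : ∑' x, ‖⟪Γ.indicator (fun x => leftRegular ℂ G x φ) x, g⟫_ℂ‖ₑ ^ 2 =
      ∑' x : Γ, (‖∑' t, g t * (starRingEnd ℂ) (φ ((x : G)⁻¹ * t))‖₊ : ℝ≥0∞) ^ 2 := by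
    rw [tsum_subtype Γ fun x => (‖∑' t, g t * (starRingEnd ℂ) (φ (x⁻¹ * t))‖₊ : ℝ≥0∞) ^ 2]
    refine tsum_congr fun x => ?_
    by_cases hx : x ∈ Γ <;> simp [hx, lp.inner_eq_tsum, enorm_eq_nnnorm]
  have hbound (C : ℝ) : ENNReal.ofReal (C * ∑' t, ‖g t‖ ^ 2) = C.toNNReal * ‖g‖ₑ ^ 2 := by
    rw [← norm_sq_eq_tsum, ENNReal.ofReal_mul' (by positivity), ENNReal.ofReal_pow (by positivity),
      ofReal_norm, ENNReal.ofReal]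
  rw [hsum, ← hbound, ← hbound]
  exact h g (summable_norm_sq g)

end TranslationFrame

theorem frame_iff_riesz_basis_general {G : Type*} [Group G]
    (Γ : Set G) (φ : G → ℂ) (hφ : Summable (fun t => ‖φ t‖ ^ 2)) :
    (∃ A B : ℝ, 0 < A ∧ A ≤ B ∧ IsTranslationFrame Γ φ A B) ↔
      (Γ = Set.univ ∧ (∃ A B : ℝ, 0 < A ∧ A ≤ B ∧ IsTranslationFrame Set.univ φ A B) ∧
        ∃ C : ℝ, ∀ c : G →₀ ℂ,
          (∑ x ∈ c.support, ‖c x‖ ^ 2) ≤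
            C * ∑' t : G, ‖∑ x ∈ c.support, c x * φ (x⁻¹ * t)‖ ^ 2) := by
  classical
  refine ⟨?_, fun ⟨hΓ, hframe, _⟩ => hΓ ▸ hframe⟩
  rintro ⟨A, B, hA, hAB, hframe⟩
  obtain ⟨φ, rfl⟩ : ∃ f : ℓ²(G, ℂ), ⇑f = φ := ⟨⟨φ, memℓp_two_iff_summable.2 hφ⟩, rfl⟩
  obtain ⟨R, hR, hsupp⟩ := hframe.isFrame_indicator.exists_convolutionRightInverse
    (Real.toNNReal_pos.2 hA)
  have hΓ : Γ = Set.univ := Set.eq_univ_of_forall fun x => by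
    by_contra hx
    simpa [hR.apply_leftRegular] using hsupp (leftRegular ℂ G x φ) x hx
  refine ⟨hΓ, ⟨A, B, hA, hAB, hΓ ▸ hframe⟩, ‖R‖ ^ 2, fun c => ?_⟩
  simpa only [norm_sq_eq_tsum, sum_smul_leftRegular_apply] using
    hR.sum_norm_sq_le c.support c

/-- For a countable discrete group `G`, `Γ ⊆ G` and `φ ∈ ℓ²(G)`, the translates
`(λ(x)φ)_{x ∈ Γ}` form a frame of `ℓ²(G)` if and only if `Γ = G` and `(λ(x)φ)_{x ∈ G}` is a
Riesz basis of `ℓ²(G)`, i.e. a frame which in addition satisfies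
`∑_{x} |c_x|² ≤ C ‖∑_x c_x λ(x)φ‖²` for every finitely supported family `(c_x)` of complex
scalars. -/
theorem frame_iff_riesz_basis {G : Type*} [Group G] [Countable G]
    (Γ : Set G) (φ : G → ℂ) (hφ : Summable (fun t => ‖φ t‖ ^ 2)) :
    (∃ A B : ℝ, 0 < A ∧ A ≤ B ∧ IsTranslationFrame Γ φ A B) ↔
      (Γ = Set.univ ∧ (∃ A B : ℝ, 0 < A ∧ A ≤ B ∧ IsTranslationFrame Set.univ φ A B) ∧
        ∃ C : ℝ, ∀ c : G →₀ ℂ,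
          (∑ x ∈ c.support, ‖c x‖ ^ 2) ≤
            C * ∑' t : G, ‖∑ x ∈ c.support, c x * φ (x⁻¹ * t)‖ ^ 2) :=
  frame_iff_riesz_basis_general Γ φ hφ

end Stmt11
end

section
/- Let 𝔤 be a finite-dimensional real Lie algebra which is not of type R, i.e. there exists X ∈ 𝔤 such that the complexification of the adjoint endomorphism ad(X) : 𝔤 → 𝔤 has an eigenvalue μ ∈ ℂ with Re(μ) ≠ 0. Then 𝔤 contains a Lie subalgebra isomorphic either to the ax+b algebra or to a Grélaud algebra; concretely, either (Case 1) there exist A, Y ∈ 𝔤 with Y ≠ 0 and ⁅A,Y⁆ = Y, or (Case 2) there exist a real number β ≠ 0 and linearly independent A, Y₁, Y₂ ∈ 𝔤 with ⁅A,Y₁⁆ = Y₁ + β·Y₂, ⁅A,Y₂⁆ = −β·Y₁ + Y₂, and ⁅Y₁,Y₂⁆ = 0. -/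
/-!
Let `y` and `x` be the real and imaginary parts of an eigenvector for the eigenvalue `a + bi` of
`ad X`, so that `⁅X, x⁆ = a x + b y` and `⁅X, y⁆ = -b x + a y`. If `b = 0`, whichever of the two is
nonzero is a real eigenvector, and dividing `X` by `a` gives the `ax+b` algebra. If `b ≠ 0`, then
`⁅X, ⁅x, y⁆⁆ = 2a ⁅x, y⁆`, because `ad X` is a derivation and `2a` is its trace on the plane spanned
by `x` and `y`. So `⁅x, y⁆` is either again a real eigenvector with nonzero eigenvalue, or zero, and
then `a⁻¹ X`, `x`, `y` span a Grélaud algebra with `β = b / a`; they are independent because `ad X`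
kills `X` but is injective on the plane.
-/

open TensorProduct

namespace Stmt17

section Complexification

variable {M : Type*} [AddCommGroup M] [Module ℝ M]

lemma exists_one_tmul_add_I_tmul_eq (z : ℂ ⊗[ℝ] M) :
    ∃ u v : M, 1 ⊗ₜ[ℝ] u + Complex.I ⊗ₜ[ℝ] v = z := by
  obtain ⟨c, rfl⟩ := TensorProduct.eq_repr_basis_left Complex.basisOneI z
  exact ⟨c 0, c 1, by simp [Finsupp.sum_fintype]⟩

lemma one_tmul_add_I_tmul_inj {u v u' v' : M} :
    1 ⊗ₜ[ℝ] u + Complex.I ⊗ₜ[ℝ] v = 1 ⊗ₜ[ℝ] u' + Complex.I ⊗ₜ[ℝ] v' ↔ u = u' ∧ v = v' := by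
  refine ⟨fun h ↦ ?_, by rintro ⟨rfl, rfl⟩; rfl⟩
  have h_coord (i : Fin 2) :=
    congrArg (TensorProduct.equivFinsuppOfBasisLeft Complex.basisOneI · i) h
  exact ⟨by simpa using h_coord 0, by simpa using h_coord 1⟩

lemma smul_one_tmul_add_I_tmul (μ : ℂ) (u v : M) :
    μ • ((1 : ℂ) ⊗ₜ[ℝ] u + Complex.I ⊗ₜ[ℝ] v) =
      1 ⊗ₜ[ℝ] (μ.re • u - μ.im • v) + Complex.I ⊗ₜ[ℝ] (μ.im • u + μ.re • v) := by
  have h_one : μ = μ.re • (1 : ℂ) + μ.im • Complex.I := by apply Complex.ext <;> simp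
  have h_I : μ * Complex.I = μ.re • Complex.I - μ.im • (1 : ℂ) := by apply Complex.ext <;> simp
  rw [smul_add, smul_tmul', smul_tmul', smul_eq_mul, smul_eq_mul, mul_one, h_I]
  nth_rw 1 [h_one]
  simp only [add_tmul, sub_tmul, tmul_add, tmul_sub, smul_tmul]
  abel

lemma exists_apply_eq_of_hasEigenvalue_baseChange {f : Module.End ℝ M} {μ : ℂ}
    (hμ : Module.End.HasEigenvalue (f.baseChange ℂ) μ) :
    ∃ x y : M, (x ≠ 0 ∨ y ≠ 0) ∧ f x = μ.re • x + μ.im • y ∧ f y = -μ.im • x + μ.re • y := by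
  obtain ⟨z, hz⟩ := hμ.exists_hasEigenvector
  obtain ⟨u, v, rfl⟩ := exists_one_tmul_add_I_tmul_eq z
  have huv : v ≠ 0 ∨ u ≠ 0 := by
    by_contra! h_zero
    exact hz.2 (by simp [h_zero])
  have h_eig := hz.apply_eq_smul
  rw [smul_one_tmul_add_I_tmul, map_add, LinearMap.baseChange_tmul,
    LinearMap.baseChange_tmul] at h_eig
  obtain ⟨hu, hv⟩ := one_tmul_add_I_tmul_inj.mp h_eig
  exact ⟨v, u, huv, by rw [hv, add_comm], by rw [hu, neg_smul, sub_eq_neg_add]⟩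

end Complexification

lemma linearIndependent_vecCons_of_apply_eq_zero {K M N : Type*} [DivisionRing K]
    [AddCommGroup M] [Module K M] [AddCommGroup N] [Module K N] {n : ℕ} {f : M →ₗ[K] N} {w : M}
    {v : Fin n → M} (hw : w ≠ 0) (hfw : f w = 0) (hv : LinearIndependent K (f ∘ v)) :
    LinearIndependent K (Matrix.vecCons w v) :=
  linearIndependent_finCons.mpr ⟨hv.of_comp, fun hw_mem ↦
    hw (Submodule.disjoint_def.mp (Submodule.range_ker_disjoint hv) w hw_mem hfw)⟩

lemma linearIndependent_pair_of_apply_eq {K M : Type*} [Field K] [LinearOrder K]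
    [IsStrictOrderedRing K] [AddCommGroup M] [Module K M] {f : Module.End K M} {a b : K} {x y : M}
    (hb : b ≠ 0) (hxy : x ≠ 0 ∨ y ≠ 0) (hx : f x = a • x + b • y) (hy : f y = -b • x + a • y) :
    LinearIndependent K ![x, y] := by
  refine LinearIndependent.pair_iff.mpr fun s t hst ↦ ?_
  have h_rot : s • y - t • x = 0 := by
    have h_apply : a • (s • x + t • y) + b • (s • y - t • x) = f (s • x + t • y) := by
      rw [map_add, map_smul, map_smul, hx, hy]
      module
    simpa [hst, hb] using h_apply
  have hx_smul : (s * s + t * t) • x = 0 := by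
    calc (s * s + t * t) • x = s • (s • x + t • y) - t • (s • y - t • x) := by module
      _ = 0 := by rw [hst, h_rot, smul_zero, smul_zero, sub_zero]
  have hy_smul : (s * s + t * t) • y = 0 := by
    calc (s * s + t * t) • y = t • (s • x + t • y) + s • (s • y - t • x) := by module
      _ = 0 := by rw [hst, h_rot, smul_zero, smul_zero, add_zero]
  have h_norm : s * s + t * t = 0 :=
    hxy.elim (smul_eq_zero.mp hx_smul).resolve_right (smul_eq_zero.mp hy_smul).resolve_right
  exact mul_self_add_mul_self_eq_zero.mp h_norm

section Lie

lemma lie_lie_eq_add_smul_of_lie_eq {R L : Type*} [CommRing R] [LieRing L] [LieAlgebra R L]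
    {X x y : L} {a b c d : R} (hx : ⁅X, x⁆ = a • x + b • y) (hy : ⁅X, y⁆ = c • x + d • y) :
    ⁅X, ⁅x, y⁆⁆ = (a + d) • ⁅x, y⁆ := by
  rw [leibniz_lie, hx, hy]
  simp only [add_lie, lie_add, smul_lie, lie_smul, lie_self]
  module

variable {K L : Type*} [Field K] [LieRing L] [LieAlgebra K L]

lemma exists_lie_eq_self_of_lie_eq_smul {X Y : L} {c : K} (hc : c ≠ 0) (hY : Y ≠ 0)
    (h : ⁅X, Y⁆ = c • Y) : ∃ A Y : L, Y ≠ 0 ∧ ⁅A, Y⁆ = Y :=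
  ⟨c⁻¹ • X, Y, hY, by rw [smul_lie, h, inv_smul_smul₀ hc]⟩

lemma linearIndependent_of_lie_eq [LinearOrder K] [IsStrictOrderedRing K] {A x y : L} {a b : K}
    (hb : b ≠ 0) (hxy : x ≠ 0 ∨ y ≠ 0) (hx : ⁅A, x⁆ = a • x + b • y)
    (hy : ⁅A, y⁆ = -b • x + a • y) : LinearIndependent K ![A, x, y] := by
  have h_pair : LinearIndependent K ![x, y] :=
    linearIndependent_pair_of_apply_eq (f := LieAlgebra.ad K L A) hb hxy hx hy
  have hAx : ⁅A, x⁆ ≠ 0 := fun h_lie ↦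
    hb (LinearIndependent.pair_iff.mp h_pair a b (hx.symm.trans h_lie)).2
  have hA : A ≠ 0 := by
    rintro rfl
    exact hAx (zero_lie x)
  -- `⁅A, x⁆` and `⁅A, y⁆` satisfy the same relations as `x` and `y`.
  have h_lie_pair : LinearIndependent K ![⁅A, x⁆, ⁅A, y⁆] :=
    linearIndependent_pair_of_apply_eq (f := LieAlgebra.ad K L A) hb (.inl hAx)
      (by rw [LieAlgebra.ad_apply, ← lie_smul, ← lie_smul, ← lie_add, ← hx])
      (by rw [LieAlgebra.ad_apply, ← lie_smul, ← lie_smul, ← lie_add, ← hy])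
  refine linearIndependent_vecCons_of_apply_eq_zero (f := LieAlgebra.ad K L A) hA (lie_self A) ?_
  rwa [← FinVec.map_eq]

end Lie

theorem subalgebra_of_not_type_R_general {L : Type*} [LieRing L] [LieAlgebra ℝ L]
    (h : ∃ (X : L) (μ : ℂ), μ.re ≠ 0 ∧
      Module.End.HasEigenvalue (LinearMap.baseChange ℂ (LieAlgebra.ad ℝ L X)) μ) :
    (∃ A Y : L, Y ≠ 0 ∧ ⁅A, Y⁆ = Y) ∨
      (∃ (β : ℝ) (A Y₁ Y₂ : L), β ≠ 0 ∧ LinearIndependent ℝ ![A, Y₁, Y₂] ∧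
        ⁅A, Y₁⁆ = Y₁ + β • Y₂ ∧ ⁅A, Y₂⁆ = (-β) • Y₁ + Y₂ ∧ ⁅Y₁, Y₂⁆ = 0) := by
  obtain ⟨X, μ, hμ, h_eig⟩ := h
  obtain ⟨x, y, hxy, hx, hy⟩ := exists_apply_eq_of_hasEigenvalue_baseChange h_eig
  rw [LieAlgebra.ad_apply] at hx hy
  by_cases hb : μ.im = 0
  · left
    rcases hxy with hx0 | hy0
    · exact exists_lie_eq_self_of_lie_eq_smul hμ hx0 (by simpa [hb] using hx)
    · exact exists_lie_eq_self_of_lie_eq_smul hμ hy0 (by simpa [hb] using hy)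
  by_cases h_comm : ⁅x, y⁆ = 0
  · right
    have hAx : ⁅μ.re⁻¹ • X, x⁆ = x + (μ.im / μ.re) • y := by
      rw [smul_lie, hx, smul_add, inv_smul_smul₀ hμ, smul_smul, div_eq_inv_mul]
    have hAy : ⁅μ.re⁻¹ • X, y⁆ = (-(μ.im / μ.re)) • x + y := by
      rw [smul_lie, hy, smul_add, inv_smul_smul₀ hμ, smul_smul, div_eq_inv_mul, mul_neg]
    have hβ : μ.im / μ.re ≠ 0 := div_ne_zero hb hμ
    exact ⟨_, _, x, y, hβ, linearIndependent_of_lie_eq (a := 1) hβ hxy (by rwa [one_smul])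
      (by rwa [one_smul]), hAx, hAy, h_comm⟩
  · left
    exact exists_lie_eq_self_of_lie_eq_smul (add_self_eq_zero.not.mpr hμ) h_comm
      (lie_lie_eq_add_smul_of_lie_eq hx hy)

/-- Let `𝔤` be a finite-dimensional real Lie algebra which is not of type R, i.e. there is
`X ∈ 𝔤` such that the complexification of `ad(X)` has an eigenvalue `μ` with `Re μ ≠ 0`.
Then `𝔤` contains a Lie subalgebra isomorphic either to the `ax+b` algebra or to a Grélaud
algebra: either there are `A, Y ∈ 𝔤` with `Y ≠ 0` and `⁅A,Y⁆ = Y`, or there are a real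
number `β ≠ 0` and linearly independent `A, Y₁, Y₂ ∈ 𝔤` with `⁅A,Y₁⁆ = Y₁ + βY₂`,
`⁅A,Y₂⁆ = −βY₁ + Y₂` and `⁅Y₁,Y₂⁆ = 0`. -/
theorem subalgebra_of_not_type_R
    {L : Type*} [LieRing L] [LieAlgebra ℝ L] [FiniteDimensional ℝ L]
    (h : ∃ (X : L) (μ : ℂ), μ.re ≠ 0 ∧
      Module.End.HasEigenvalue (LinearMap.baseChange ℂ (LieAlgebra.ad ℝ L X)) μ) :
    (∃ A Y : L, Y ≠ 0 ∧ ⁅A, Y⁆ = Y) ∨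
      (∃ (β : ℝ) (A Y₁ Y₂ : L), β ≠ 0 ∧ LinearIndependent ℝ ![A, Y₁, Y₂] ∧
        ⁅A, Y₁⁆ = Y₁ + β • Y₂ ∧ ⁅A, Y₂⁆ = (-β) • Y₁ + Y₂ ∧ ⁅Y₁, Y₂⁆ = 0) :=
  subalgebra_of_not_type_R_general h

end Stmt17
end
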